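/- (Theorem 2) Suppose p, c, r are continuous and there exist α > 0, β > 0, γ > 0 such that ⟨p(x₁) − p(x₂), x₁ − x₂⟩ ≥ α‖x₁ − x₂‖² for all x₁, x₂ ∈ ℝ₊ⁿ, ⟨c(λ₁) − c(λ₂), λ₁ − λ₂⟩ ≤ −β‖λ₁ − λ₂‖² for all λ₁, λ₂ ∈ ℝ₊ⁿ, and ⟨r(v₁) − r(v₂), v₁ − v₂⟩ ≥ γ‖v₁ − v₂‖² for all v₁, v₂ ∈ ℝ₊ᵐ. Then there exists a unique y* = (x*, λ*, v*) ∈ Ω such that ⟨g(y*), y − y*⟩ ≤ 0 for all y ∈ Ω. -/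

import Mathlib

open Matrix Filter
open scoped BigOperators

noncomputable section

/-- Vectors in ℝ^k. -/
abbrev Vec (k : ℕ) := Fin k → ℝ

/-- Standard Euclidean inner product on ℝ^k. -/
def ip {k : ℕ} (u v : Vec k) : ℝ := ∑ i, u i * v i

/-- Standard Euclidean norm on ℝ^k. -/
def nrm {k : ℕ} (u : Vec k) : ℝ := Real.sqrt (ip u u)

/-- The space ℝⁿ × ℝⁿ × ℝᵐ of triples y = (x, λ, v). -/
abbrev Triple (n m : ℕ) := Vec n × Vec n × Vec m

/-- Euclidean inner product on the triple space. -/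
def ipT {n m : ℕ} (y z : Triple n m) : ℝ :=
  ip y.1 z.1 + ip y.2.1 z.2.1 + ip y.2.2 z.2.2

/-- Euclidean norm on the triple space. -/
def nrmT {n m : ℕ} (y : Triple n m) : ℝ := Real.sqrt (ipT y y)

/-- Ω = ℝ₊ⁿ × ℝ₊ⁿ × ℝ₊ᵐ. -/
def Om (n m : ℕ) : Set (Triple n m) :=
  {y | (∀ j, 0 ≤ y.1 j) ∧ (∀ j, 0 ≤ y.2.1 j) ∧ (∀ i, 0 ≤ y.2.2 i)}

/-- The operator g(x, λ, v) = ((I − A)ᵀλ − p(x) − Bᵀv, c(λ) − (I − A)x, Bx − r(v)). -/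
def gOp {n m : ℕ} (A : Matrix (Fin n) (Fin n) ℝ) (B : Matrix (Fin m) (Fin n) ℝ)
    (p c : Vec n → Vec n) (r : Vec m → Vec m) (y : Triple n m) : Triple n m :=
  ((1 - A)ᵀ *ᵥ y.2.1 - p y.1 - Bᵀ *ᵥ y.2.2,
   c y.2.1 - (1 - A) *ᵥ y.1,
   B *ᵥ y.1 - r y.2.2)

/-- P_Ω : componentwise positive part (Euclidean projection onto Ω). -/
def projOm {n m : ℕ} (y : Triple n m) : Triple n m :=
  (fun j => max (y.1 j) 0, fun j => max (y.2.1 j) 0, fun i => max (y.2.2 i) 0)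

lemma game_aux {ι : Type} [Fintype ι] [Nonempty ι] (a : ι → ι → ℝ)
    (ha : ∀ i j, 0 ≤ a i j + a j i) :
    ∃ w ∈ stdSimplex ℝ ι, ∀ i, 0 ≤ ∑ j, w j * a i j := by
  classical
  by_contra hcon
  push Not at hcon
  let L : (ι → ℝ) →ₗ[ℝ] (ι → ℝ) := Matrix.mulVecLin (Matrix.of a)
  have hL : ∀ w i, L w i = ∑ j, w j * a i j := by
    intro w i
    simp [L, Matrix.mulVec, dotProduct, mul_comm]
  have hLc : Continuous L := L.continuous_of_finiteDimensional
  have hs : Convex ℝ (L '' stdSimplex ℝ ι) := (convex_stdSimplex ℝ ι).linear_image L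
  have hsc : IsCompact (L '' stdSimplex ℝ ι) := (isCompact_stdSimplex ℝ ι).image hLc
  have ht : Convex ℝ (Set.Ici (0 : ι → ℝ)) := convex_Ici 0
  have htc : IsClosed (Set.Ici (0 : ι → ℝ)) := isClosed_Ici
  have hd : Disjoint (L '' stdSimplex ℝ ι) (Set.Ici (0 : ι → ℝ)) := by
    rw [Set.disjoint_left]
    rintro _ ⟨w, hw, rfl⟩ h
    obtain ⟨i, hi⟩ := hcon w hw
    have := h i
    rw [hL] at this
    simp only [Pi.zero_apply] at this
    linarith
  obtain ⟨f, u, v, h1, huv, h2⟩ := geometric_hahn_banach_compact_closed hs hsc ht htc hd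
  have hv0 : v < 0 := by simpa using h2 0 (by simp)
  let z : ι → ℝ := fun i => f (Pi.single i 1)
  have hf : ∀ x, f x = ∑ i, x i * z i := by
    intro x
    conv_lhs => rw [pi_eq_sum_univ' x]
    simp only [map_sum, map_smul, smul_eq_mul, z]
  have hz : ∀ i, 0 ≤ z i := by
    intro i
    by_contra hneg
    push Not at hneg
    have := h2 ((v / z i) • Pi.single i 1) (by
      have h0 : 0 ≤ v / z i := div_nonneg_of_nonpos hv0.le hneg.le
      intro j
      rw [Pi.smul_apply, smul_eq_mul]
      refine mul_nonneg h0 ?_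
      rw [Pi.single_apply]
      split_ifs <;> simp)
    rw [map_smul, smul_eq_mul, div_mul_cancel₀ _ hneg.ne] at this
    exact lt_irrefl _ this
  have hneg : ∀ w ∈ stdSimplex ℝ ι, f (L w) < 0 := fun w hw =>
    (h1 _ ⟨w, hw, rfl⟩).trans (huv.trans hv0)
  have hS : 0 < ∑ i, z i := by
    rcases (Finset.sum_nonneg fun i (_ : i ∈ Finset.univ) => hz i).lt_or_eq with h | h
    · exact h
    · exfalso
      have hz0 := (Finset.sum_eq_zero_iff_of_nonneg fun i _ => hz i).1 h.symm
      have := hneg _ (single_mem_stdSimplex ℝ (Classical.arbitrary ι))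
      rw [hf] at this
      simp [hz0] at this
  have hw : (fun i => (∑ i, z i)⁻¹ * z i) ∈ stdSimplex ℝ ι := by
    refine ⟨fun i => mul_nonneg (inv_nonneg.2 hS.le) (hz i), ?_⟩
    rw [← Finset.mul_sum, inv_mul_cancel₀ hS.ne']
  have hlt := hneg _ hw
  rw [hf] at hlt
  simp only [hL] at hlt
  have e : ∑ i, (∑ j, (∑ i, z i)⁻¹ * z j * a i j) * z i
      = (∑ i, z i)⁻¹ * ∑ i, ∑ j, z i * z j * a i j := by
    rw [Finset.mul_sum]
    refine Finset.sum_congr rfl fun i _ => ?_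
    rw [Finset.sum_mul, Finset.mul_sum]
    refine Finset.sum_congr rfl fun j _ => ?_
    ring
  rw [e] at hlt
  have h3 : 0 ≤ ∑ i, ∑ j, z i * z j * a i j := by
    have h4 : 0 ≤ ∑ i, ∑ j, z i * z j * (a i j + a j i) :=
      Finset.sum_nonneg fun i _ => Finset.sum_nonneg fun j _ =>
        mul_nonneg (mul_nonneg (hz i) (hz j)) (ha i j)
    have h5 : ∑ i, ∑ j, z i * z j * a j i = ∑ i, ∑ j, z i * z j * a i j := by
      rw [Finset.sum_comm]
      refine Finset.sum_congr rfl fun i _ => Finset.sum_congr rfl fun j _ => ?_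
      ring
    simp only [mul_add, Finset.sum_add_distrib] at h4
    linarith
  have := mul_nonneg (inv_nonneg.2 hS.le) h3
  linarith

lemma vi_aux {E : Type} [NormedAddCommGroup E] [InnerProductSpace ℝ E] [FiniteDimensional ℝ E]
    (K : Set E) (hK : Convex ℝ K) (hKc : IsClosed K) (hKn : K.Nonempty)
    (F : E → E) (hF : Continuous F) (s : ℝ) (hs : 0 < s)
    (hm : ∀ x ∈ K, ∀ y ∈ K, 2 * s * ‖x - y‖ ^ 2 ≤ inner ℝ (F x - F y) (x - y)) :
    ∃ u ∈ K, ∀ y ∈ K, 0 ≤ inner ℝ (F u) (y - u) := by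
  classical
  obtain ⟨y0, hy0⟩ := hKn
  let M : E → Set E := fun y => {u | s * ‖y - u‖ ^ 2 ≤ inner ℝ (F y) (y - u)}
  have hMc : ∀ y, IsClosed (M y) := fun y =>
    isClosed_le (by fun_prop) (by fun_prop)
  have hMb : IsCompact (K ∩ M y0) := by
    refine (isCompact_closedBall y0 (‖F y0‖ / s)).of_isClosed_subset (hKc.inter (hMc y0)) ?_
    rintro u ⟨-, hu⟩
    have hu' : s * ‖y0 - u‖ ^ 2 ≤ ‖F y0‖ * ‖y0 - u‖ := le_trans hu (real_inner_le_norm _ _)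
    rw [Metric.mem_closedBall, dist_comm, dist_eq_norm, le_div_iff₀ hs]
    rcases (norm_nonneg (y0 - u)).eq_or_lt with h | h
    · rw [← h]; simp
    · by_contra hc
      push Not at hc
      nlinarith
  have hfin := hMb.inter_iInter_nonempty (fun y : K => M y) (fun y => hMc y) (by
    intro t
    let T : Finset K := insert ⟨y0, hy0⟩ t
    haveI : Nonempty T := ⟨⟨⟨y0, hy0⟩, Finset.mem_insert_self _ _⟩⟩
    let Y : T → E := fun i => ((i : K) : E)
    have hY : ∀ i, Y i ∈ K := fun i => (i : K).2
    let a : T → T → ℝ := fun i j => inner ℝ (F (Y i)) (Y i - Y j) - s * ‖Y i - Y j‖ ^ 2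
    obtain ⟨w, hw, hwa⟩ := game_aux a (by
      intro i j
      have h := hm _ (hY i) _ (hY j)
      have e1 : Y j - Y i = -(Y i - Y j) := by abel
      simp only [a]
      rw [e1, norm_neg, inner_neg_right]
      rw [inner_sub_left] at h
      linarith)
    have hu : ∀ i, (∑ j, w j • Y j) ∈ M (Y i) := by
      intro i
      have e : Y i - ∑ j, w j • Y j = ∑ j, w j • (Y i - Y j) := by
        simp only [smul_sub, Finset.sum_sub_distrib]
        rw [← Finset.sum_smul, hw.2, one_smul]
      have hcv : ConvexOn ℝ Set.univ (fun x : E => ‖x‖ ^ 2) :=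
        convexOn_univ_norm.pow (fun x _ => norm_nonneg x) 2
      have h1 := hcv.map_sum_le (t := Finset.univ) (w := w) (p := fun j => Y i - Y j)
        (fun j _ => hw.1 j) hw.2 (fun _ _ => Set.mem_univ _)
      change s * ‖Y i - ∑ j, w j • Y j‖ ^ 2 ≤ inner ℝ (F (Y i)) (Y i - ∑ j, w j • Y j)
      rw [e, inner_sum]
      have h2 := hwa i
      simp only [a, mul_sub, Finset.sum_sub_distrib] at h2
      simp only [inner_smul_right]
      simp only [smul_eq_mul] at h1
      have h3 := mul_le_mul_of_nonneg_left h1 hs.le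
      rw [Finset.mul_sum] at h3
      have h4 : ∑ j, s * (w j * ‖Y i - Y j‖ ^ 2) = ∑ j, w j * (s * ‖Y i - Y j‖ ^ 2) :=
        Finset.sum_congr rfl fun j _ => by ring
      linarith
    refine ⟨∑ j, w j • Y j, ⟨hK.sum_mem (fun j _ => hw.1 j) hw.2 fun j _ => hY j,
      hu ⟨⟨y0, hy0⟩, Finset.mem_insert_self _ _⟩⟩, ?_⟩
    simp only [Set.mem_iInter]
    intro y hy
    exact hu ⟨y, Finset.mem_insert_of_mem hy⟩)
  obtain ⟨u, ⟨huK, -⟩, hu⟩ := hfin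
  simp only [Set.mem_iInter] at hu
  refine ⟨u, huK, fun y hy => ?_⟩
  have hmin : ∀ t ∈ Set.Ioc (0 : ℝ) 1, 0 ≤ inner ℝ (F (u + t • (y - u))) (y - u) := by
    intro t ht
    have hmem : u + t • (y - u) ∈ K := hK.add_smul_sub_mem huK hy ⟨ht.1.le, ht.2⟩
    have h := hu ⟨_, hmem⟩
    have h' : s * ‖u + t • (y - u) - u‖ ^ 2
      ≤ inner ℝ (F (u + t • (y - u))) (u + t • (y - u) - u) := h
    rw [add_sub_cancel_left, inner_smul_right] at h'
    have h0 : 0 ≤ s * ‖t • (y - u)‖ ^ 2 := by positivity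
    exact nonneg_of_mul_nonneg_right (h0.trans h') ht.1
  have hcont : Continuous fun t : ℝ => (inner ℝ (F (u + t • (y - u))) (y - u) : ℝ) := by
    fun_prop
  have hlim : Tendsto (fun t : ℝ => (inner ℝ (F (u + t • (y - u))) (y - u) : ℝ))
      (nhdsWithin 0 (Set.Ioi 0)) (nhds (inner ℝ (F u) (y - u))) := by
    have := (hcont.tendsto 0).mono_left (nhdsWithin_le_nhds (s := Set.Ioi 0))
    simpa using this
  refine ge_of_tendsto hlim ?_
  filter_upwards [Ioc_mem_nhdsGT (zero_lt_one (α := ℝ))] with t ht using hmin t ht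

lemma ip_self_nonneg {k : ℕ} (u : Vec k) : 0 ≤ ip u u :=
  Finset.sum_nonneg fun i _ => mul_self_nonneg _

lemma nrm_sq {k : ℕ} (u : Vec k) : nrm u ^ 2 = ip u u :=
  Real.sq_sqrt (ip_self_nonneg u)

lemma ip_eq_dot {k : ℕ} (u v : Vec k) : ip u v = u ⬝ᵥ v := rfl

lemma ipT_self_nonneg {n m : ℕ} (y : Triple n m) : 0 ≤ ipT y y :=
  add_nonneg (add_nonneg (ip_self_nonneg _) (ip_self_nonneg _)) (ip_self_nonneg _)

lemma ip_self_eq_zero {k : ℕ} (u : Vec k) (h : ip u u = 0) : u = 0 :=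
  dotProduct_self_eq_zero.1 h

lemma ipT_sub_left {n m : ℕ} (y z w : Triple n m) : ipT (y - z) w = ipT y w - ipT z w := by
  simp only [ipT, ip_eq_dot, Prod.fst_sub, Prod.snd_sub, sub_dotProduct]; ring

lemma ipT_neg_left {n m : ℕ} (y w : Triple n m) : ipT (-y) w = - ipT y w := by
  simp only [ipT, ip_eq_dot, Prod.fst_neg, Prod.snd_neg, neg_dotProduct]; ring

lemma ipT_neg_right {n m : ℕ} (y w : Triple n m) : ipT y (-w) = - ipT y w := by
  simp only [ipT, ip_eq_dot, Prod.fst_neg, Prod.snd_neg, dotProduct_neg]; ring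

/-- Linear identification of triples with Euclidean space. -/
def toE (n m : ℕ) : Triple n m →ₗ[ℝ] EuclideanSpace ℝ (Fin n ⊕ (Fin n ⊕ Fin m)) where
  toFun y := WithLp.toLp 2 (Sum.elim y.1 (Sum.elim y.2.1 y.2.2))
  map_add' y z := by
    ext i; rcases i with i | i | i <;> simp
  map_smul' a z := by
    ext i; rcases i with i | i | i <;> simp

/-- Its inverse. -/
def ofE (n m : ℕ) : EuclideanSpace ℝ (Fin n ⊕ (Fin n ⊕ Fin m)) →ₗ[ℝ] Triple n m where
  toFun e := (fun i => e (Sum.inl i), fun i => e (Sum.inr (Sum.inl i)),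
    fun i => e (Sum.inr (Sum.inr i)))
  map_add' y z := rfl
  map_smul' a z := rfl

lemma ofE_toE {n m : ℕ} (y : Triple n m) : ofE n m (toE n m y) = y := rfl

lemma toE_ofE {n m : ℕ} (e) : toE n m (ofE n m e) = e := by
  ext i; rcases i with i | i | i <;> rfl

lemma inner_eq {n m : ℕ} (y z) : inner ℝ y z = ipT (ofE n m y) (ofE n m z) := by
  simp [PiLp.inner_apply, ipT, ip, Fintype.sum_sum_type, add_assoc, mul_comm]
  rfl

/-- Theorem 2: if p, c, r are continuous and strongly monotone
(increasing, decreasing, increasing respectively) on the nonnegative orthants, then the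
NPCE exists and is unique, i.e. there is a unique y* ∈ Ω solving the variational
inequality ⟨g(y*), y − y*⟩ ≤ 0 for all y ∈ Ω. -/
theorem stmt5 {n m : ℕ} (hn : 0 < n) (hm : 0 < m)
    (A : Matrix (Fin n) (Fin n) ℝ) (B : Matrix (Fin m) (Fin n) ℝ)
    (p c : Vec n → Vec n) (r : Vec m → Vec m)
    (hpc : Continuous p) (hcc : Continuous c) (hrc : Continuous r)
    (α β γ : ℝ) (hα : 0 < α) (hβ : 0 < β) (hγ : 0 < γ)
    (hp : ∀ x₁ x₂ : Vec n, (∀ j, 0 ≤ x₁ j) → (∀ j, 0 ≤ x₂ j) →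
      α * nrm (x₁ - x₂) ^ 2 ≤ ip (p x₁ - p x₂) (x₁ - x₂))
    (hc : ∀ l₁ l₂ : Vec n, (∀ j, 0 ≤ l₁ j) → (∀ j, 0 ≤ l₂ j) →
      ip (c l₁ - c l₂) (l₁ - l₂) ≤ -β * nrm (l₁ - l₂) ^ 2)
    (hr : ∀ v₁ v₂ : Vec m, (∀ i, 0 ≤ v₁ i) → (∀ i, 0 ≤ v₂ i) →
      γ * nrm (v₁ - v₂) ^ 2 ≤ ip (r v₁ - r v₂) (v₁ - v₂)) :
    ∃! ys : Triple n m, ys ∈ Om n m ∧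
      ∀ y ∈ Om n m, ipT (gOp A B p c r ys) (y - ys) ≤ 0 := by
  have hmono : ∃ s > 0, ∀ y ∈ Om n m, ∀ z ∈ Om n m, 2 * s * ipT (y - z) (y - z) ≤
      - ipT (gOp A B p c r y - gOp A B p c r z) (y - z) := by
    refine ⟨min α (min β γ) / 2, by positivity, ?_⟩
    rintro ⟨x, l, v⟩ ⟨hx, hl, hv⟩ ⟨x', l', v'⟩ ⟨hx', hl', hv'⟩
    have h1 := hp x x' hx hx'
    have h2 := hc l l' hl hl'
    have h3 := hr v v' hv hv'
    rw [nrm_sq] at h1 h2 h3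
    have k1 := mul_le_mul_of_nonneg_right (min_le_left α (min β γ)) (ip_self_nonneg (x - x'))
    have k2 := mul_le_mul_of_nonneg_right ((min_le_right α (min β γ)).trans (min_le_left β γ))
      (ip_self_nonneg (l - l'))
    have k3 := mul_le_mul_of_nonneg_right ((min_le_right α (min β γ)).trans (min_le_right β γ))
      (ip_self_nonneg (v - v'))
    have e : ipT (gOp A B p c r (x, l, v) - gOp A B p c r (x', l', v'))
        ((x, l, v) - (x', l', v')) =
        - ip (p x - p x') (x - x') + ip (c l - c l') (l - l') - ip (r v - r v') (v - v') := by
      have f1 : ((1 - A)ᵀ *ᵥ (l - l')) ⬝ᵥ (x - x') = ((1 - A) *ᵥ (x - x')) ⬝ᵥ (l - l') := by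
        rw [Matrix.mulVec_transpose, ← Matrix.dotProduct_mulVec, dotProduct_comm]
      have f2 : (Bᵀ *ᵥ (v - v')) ⬝ᵥ (x - x') = (B *ᵥ (x - x')) ⬝ᵥ (v - v') := by
        rw [Matrix.mulVec_transpose, ← Matrix.dotProduct_mulVec, dotProduct_comm]
      simp only [ipT, gOp, ip_eq_dot, Prod.mk_sub_mk]
      have g1 : (1 - A)ᵀ *ᵥ l - p x - Bᵀ *ᵥ v - ((1 - A)ᵀ *ᵥ l' - p x' - Bᵀ *ᵥ v')
        = (1 - A)ᵀ *ᵥ (l - l') - (p x - p x') - Bᵀ *ᵥ (v - v') := by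
        simp only [Matrix.mulVec_sub]; abel
      have g2 : c l - (1 - A) *ᵥ x - (c l' - (1 - A) *ᵥ x')
        = (c l - c l') - (1 - A) *ᵥ (x - x') := by
        simp only [Matrix.mulVec_sub]; abel
      have g3 : B *ᵥ x - r v - (B *ᵥ x' - r v') = B *ᵥ (x - x') - (r v - r v') := by
        simp only [Matrix.mulVec_sub]; abel
      rw [g1, g2, g3]
      generalize x - x' = dx at *
      generalize l - l' = dl at *
      generalize v - v' = dv at *
      simp only [sub_dotProduct ((1 - A)ᵀ *ᵥ dl - _), sub_dotProduct ((1 - A)ᵀ *ᵥ dl),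
        sub_dotProduct (c l - c l'), sub_dotProduct (B *ᵥ dx)]
      linarith
    rw [e]
    simp only [ipT, Prod.mk_sub_mk]
    nlinarith
  obtain ⟨s, hs, hmono⟩ := hmono
  have hgc : Continuous (gOp A B p c r) := by
    unfold gOp
    fun_prop
  have hoc : Continuous (ofE n m) := (ofE n m).continuous_of_finiteDimensional
  have htc : Continuous (toE n m) := (toE n m).continuous_of_finiteDimensional
  have hOm : Om n m = Set.Ici 0 := by
    ext ⟨x, l, v⟩
    simp [Om, Prod.le_def, Pi.le_def]
  obtain ⟨u, huK, hu⟩ := vi_aux (ofE n m ⁻¹' Om n m)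
    (by rw [hOm]; exact (convex_Ici 0).linear_preimage (ofE n m))
    (by rw [hOm]; exact isClosed_Ici.preimage hoc)
    ⟨0, by rw [hOm]; simp⟩
    (fun e => toE n m (-gOp A B p c r (ofE n m e)))
    (by fun_prop) s hs (by
      intro x hx y hy
      have := hmono _ hx _ hy
      rw [← real_inner_self_eq_norm_sq, inner_eq, inner_eq, map_sub, map_sub, ofE_toE, ofE_toE,
        ipT_sub_left (-_), ipT_neg_left, ipT_neg_left]
      rw [ipT_sub_left (gOp A B p c r _)] at this
      linarith)
  have hsol : ∀ y ∈ Om n m, ipT (gOp A B p c r (ofE n m u)) (y - ofE n m u) ≤ 0 := by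
    intro y hy
    have := hu (toE n m y) hy
    rw [inner_eq, map_sub, ofE_toE, ofE_toE, ipT_neg_left] at this
    linarith
  refine ⟨ofE n m u, ⟨huK, hsol⟩, ?_⟩
  rintro z ⟨hz, hzs⟩
  have h1 := hsol z hz
  have h2 := hzs _ huK
  have h3 := hmono z hz _ huK
  rw [← neg_sub z, ipT_neg_right] at h2
  rw [ipT_sub_left (gOp A B p c r _)] at h3
  have h4 := ipT_self_nonneg (z - ofE n m u)
  have h5 : ipT (z - ofE n m u) (z - ofE n m u) = 0 := by nlinarith
  generalize ofE n m u = w at *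
  have a1 := ip_self_nonneg (z - w).1
  have a2 := ip_self_nonneg (z - w).2.1
  have a3 := ip_self_nonneg (z - w).2.2
  unfold ipT at h5
  have b1 := ip_self_eq_zero (z - w).1 (by linarith)
  have b2 := ip_self_eq_zero (z - w).2.1 (by linarith)
  have b3 := ip_self_eq_zero (z - w).2.2 (by linarith)
  exact sub_eq_zero.1 (Prod.ext b1 (Prod.ext b2 b3))
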